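/- In the capacitated repeated stochastic matching model with arbitrary positive integer vertex capacities, for every capacitated stable matching process SM (i.e., for every tie-breaking rule in the greedy step), every online algorithm ALG, and all nonnegative round weights w_1, …, w_T, the expected reward of SM is at least 1/11 times the expected reward of ALG. -/

import Mathlib

open Finset

/-- A finite simple graph presented via an abstract edge type: each edge has a
set of exactly two endpoints, and distinct edges have distinct endpoint sets. -/
structure GraphEdges (V E : Type) where
  ends : E → Finset V
  card_ends : ∀ e, (ends e).card = 2
  ends_injective : Function.Injective ends

variable {V E : Type}

/-- A capacitated matching: each vertex `v` is incident to at most `C v`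
of its edges. -/
def GraphEdges.IsCapMatching [DecidableEq V] (G : GraphEdges V E) (C : V → ℕ)
    (M : Finset E) : Prop :=
  ∀ v, (M.filter (fun e => v ∈ G.ends e)).card ≤ C v

/-- `select` is an online algorithm in the capacitated model: under each
realization `ω` it selects a capacitated matching in every round, and its
round-`t` selection depends only on its own selections in earlier rounds and
on the realized values of the edges it selected in those rounds. -/
def GraphEdges.IsOnlineCap [DecidableEq V] (G : GraphEdges V E) (C : V → ℕ)
    (select : (E → Bool) → ℕ → Finset E) : Prop :=
  (∀ ω t, G.IsCapMatching C (select ω t)) ∧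
  (∀ ω ω' t, (∀ s, s < t → ∀ e ∈ select ω s, ω' e = ω e) → select ω' t = select ω t)

/-- Probability of the sample graph `ω` under independent Bernoulli edges. -/
def probOf [Fintype E] (p : E → ℝ) (ω : E → Bool) : ℝ :=
  ∏ e : E, if ω e then p e else 1 - p e

/-- Expected reward of an algorithm: the `w`-weighted expected number of
successful selected edges over rounds `0, …, T-1`. -/
noncomputable def expectedReward [Fintype E] [DecidableEq E] (p : E → ℝ) (w : ℕ → ℝ)
    (T : ℕ) (select : (E → Bool) → ℕ → Finset E) : ℝ :=
  ∑ ω : E → Bool, probOf p ω *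
    ∑ t ∈ Finset.range T, w t * ((select ω t).filter (fun e => ω e)).card

/-- Edges selected by `select` in rounds before `t` under realization `ω`. -/
def selectedBefore [DecidableEq E] (select : (E → Bool) → ℕ → Finset E)
    (ω : E → Bool) (t : ℕ) : Finset E :=
  (Finset.range t).biUnion (select ω)

/-- An edge `f` is available for the greedy step, given the dead (previously
selected and revealed unsuccessful) edges `D` and the current partial
capacitated matching `M`: it is not dead, not already in `M`, and can be added
to `M` without violating any vertex capacity. -/
def GraphEdges.AvailCap [DecidableEq V] [DecidableEq E] (G : GraphEdges V E) (C : V → ℕ)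
    (D M : Finset E) (f : E) : Prop :=
  f ∉ D ∧ f ∉ M ∧ G.IsCapMatching C (insert f M)

/-- `L` records, in order, the edges added by a run of the greedy procedure
extending the committed capacitated matching `A`, avoiding dead edges `D`:
each added edge is available (w.r.t. the edge set built so far) of maximum
probability, and at the end no available edge remains. -/
def GraphEdges.IsGreedyRunCap [DecidableEq V] [DecidableEq E] (G : GraphEdges V E)
    (C : V → ℕ) (p : E → ℝ) (D A : Finset E) (L : List E) : Prop :=
  (∀ i : Fin L.length,
      G.AvailCap C D (A ∪ (L.take i).toFinset) (L.get i) ∧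
      ∀ f, G.AvailCap C D (A ∪ (L.take i).toFinset) f → p f ≤ p (L.get i)) ∧
  (∀ f, ¬ G.AvailCap C D (A ∪ L.toFinset) f)

/-- `select` is a capacitated stable matching process: an online algorithm
which in each round keeps all previously selected successful edges and
augments them greedily (ties broken arbitrarily). -/
def GraphEdges.IsSMCap [DecidableEq V] [DecidableEq E] (G : GraphEdges V E)
    (C : V → ℕ) (p : E → ℝ) (select : (E → Bool) → ℕ → Finset E) : Prop :=
  G.IsOnlineCap C select ∧
  ∀ ω t,
    ∃ L : List E,
      G.IsGreedyRunCap C p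
        ((selectedBefore select ω t).filter (fun e => ¬ ω e))
        ((selectedBefore select ω t).filter (fun e => ω e)) L ∧
      select ω t = (selectedBefore select ω t).filter (fun e => ω e) ∪ L.toFinset

/-!
An edge `e` that succeeds for the competing algorithm in round `t`, first tried there in round `s`,
either is kept by the stable matching process or was blocked for it in round `s`, at an endpoint
`v` saturated by kept edges and by new edges at least as probable as `e`. Charge `e` fractionally to
these edges, each receiving `1 / C v`. Both algorithms respect the capacities, so an edge receives
at most `1` per endpoint. A kept edge `e` pays for itself, so the kept edges account for a
factor `1 + 2`. Charges to new edges are compared in expectation, since the success of `e` is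
independent of everything known before `e` is tried, and account for a factor `2`. This gives the
constant `5`.
-/

section Expectation

variable [Fintype E]

lemma probOf_nonneg {p : E → ℝ} (hp : ∀ e, 0 ≤ p e ∧ p e ≤ 1) (ω : E → Bool) :
    0 ≤ probOf p ω := by
  refine prod_nonneg fun e _ => ?_
  split_ifs
  exacts [(hp e).1, sub_nonneg.2 (hp e).2]

variable [DecidableEq E]

/-- The expected value of `F` over the random sample graph with edge probabilities `p`. -/
noncomputable def expectation (p : E → ℝ) (F : (E → Bool) → ℝ) : ℝ :=
  ∑ ω, probOf p ω * F ω

lemma expectation_mono {p : E → ℝ} (hp : ∀ e, 0 ≤ p e ∧ p e ≤ 1) {F F' : (E → Bool) → ℝ}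
    (h : ∀ ω, F ω ≤ F' ω) : expectation p F ≤ expectation p F' :=
  sum_le_sum fun ω _ => mul_le_mul_of_nonneg_left (h ω) (probOf_nonneg hp ω)

lemma expectation_add (p : E → ℝ) (F F' : (E → Bool) → ℝ) :
    expectation p (fun ω => F ω + F' ω) = expectation p F + expectation p F' := by
  simp only [expectation, mul_add, sum_add_distrib]

lemma expectation_const_mul (p : E → ℝ) (a : ℝ) (F : (E → Bool) → ℝ) :
    expectation p (fun ω => a * F ω) = a * expectation p F := by
  simp only [expectation, mul_sum, mul_left_comm]

lemma expectation_sum {ι : Type*} (p : E → ℝ) (s : Finset ι) (F : ι → (E → Bool) → ℝ) :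
    expectation p (fun ω => ∑ i ∈ s, F i ω) = ∑ i ∈ s, expectation p (F i) := by
  simp only [expectation, mul_sum]
  exact sum_comm

lemma expectation_indicator_mul (p : E → ℝ) (e : E) {F : (E → Bool) → ℝ}
    (hF : ∀ ω b, F (Function.update ω e b) = F ω) :
    expectation p (fun ω => if ω e then F ω else 0) = p e * expectation p F := by
  have probOf_split (ω : E → Bool) : probOf p ω = (if ω e then p e else 1 - p e) *
      ∏ f ∈ univ.erase e, if ω f then p f else 1 - p f :=
    (mul_prod_erase univ (fun f => if ω f then p f else 1 - p f) (mem_univ e)).symm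
  have prod_erase_update (ω : E → Bool) (b : Bool) :
      (∏ f ∈ univ.erase e, if Function.update ω e b f then p f else 1 - p f) =
        ∏ f ∈ univ.erase e, if ω f then p f else 1 - p f :=
    prod_congr rfl fun f hf => by rw [Function.update_of_ne (ne_of_mem_erase hf)]
  -- Flipping the state of `e` negates each summand of the difference of the two sides.
  have cancel : ∑ ω, (probOf p ω * (if ω e then F ω else 0) - p e * (probOf p ω * F ω)) = 0 := by
    refine sum_involution (fun ω _ => Function.update ω e (!ω e)) (fun ω _ => ?_)
      (fun ω _ _ h => ?_) (fun _ _ => mem_univ _) (fun ω _ => by simp)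
    · rw [probOf_split ω, probOf_split (Function.update ω e (!ω e)), prod_erase_update, hF,
        Function.update_self]
      cases ω e <;>
        simp only [Bool.not_true, Bool.not_false, Bool.false_eq_true, if_true, if_false] <;> ring
    · simpa using congrFun h e
  rw [sum_sub_distrib, ← mul_sum] at cancel
  exact sub_eq_zero.1 cancel

lemma expectation_sum_successful (p : E → ℝ) {X : (E → Bool) → Finset E}
    {c : (E → Bool) → E → ℝ}
    (h : ∀ ω e b, e ∈ X ω →
      e ∈ X (Function.update ω e b) ∧ c (Function.update ω e b) e = c ω e) :
    expectation p (fun ω => ∑ e ∈ X ω with ω e, c ω e) =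
      expectation p (fun ω => ∑ e ∈ X ω, p e * c ω e) := by
  let F (e : E) (ω : E → Bool) : ℝ := if e ∈ X ω then c ω e else 0
  have mem_update (ω : E → Bool) (e : E) (b : Bool) :
      e ∈ X (Function.update ω e b) ↔ e ∈ X ω :=
    ⟨fun he => by simpa using (h _ e (ω e) he).1, fun he => (h ω e b he).1⟩
  have hF (e : E) (ω : E → Bool) (b : Bool) : F e (Function.update ω e b) = F e ω := by
    by_cases he : e ∈ X ω
    · simp only [F, mem_update, he, if_true, (h ω e b he).2]
    · simp only [F, mem_update, he, if_false]
  calc expectation p (fun ω => ∑ e ∈ X ω with ω e, c ω e)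
      = expectation p (fun ω => ∑ e, if ω e then F e ω else 0) := by
        congr! 2 with ω
        rw [← sum_filter, ← sum_filter, filter_filter]
        congr 1
        ext e
        simp [and_comm]
    _ = ∑ e, p e * expectation p (F e) := by
        rw [expectation_sum]
        exact sum_congr rfl fun e _ => expectation_indicator_mul p e (hF e)
    _ = expectation p (fun ω => ∑ e ∈ X ω, p e * c ω e) := by
        simp only [← expectation_const_mul, ← expectation_sum, F, mul_ite, mul_zero, sum_ite_mem,
          univ_inter]

lemma expectation_card_successful (p : E → ℝ) {X : (E → Bool) → Finset E}
    (h : ∀ ω e b, e ∈ X ω → e ∈ X (Function.update ω e b)) :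
    expectation p (fun ω => (#{e ∈ X ω | ω e} : ℝ)) = expectation p (fun ω => ∑ e ∈ X ω, p e) := by
  simpa using expectation_sum_successful p (c := fun _ _ => 1)
    fun ω e b he => ⟨h ω e b he, rfl⟩

lemma expectedReward_eq_sum_expectation (p : E → ℝ) (w : ℕ → ℝ) (T : ℕ)
    (select : (E → Bool) → ℕ → Finset E) :
    expectedReward p w T select =
      ∑ t ∈ range T, w t * expectation p (fun ω => (#{e ∈ select ω t | ω e} : ℝ)) := by
  simp only [← expectation_const_mul, ← expectation_sum]
  rfl

lemma expectedReward_nonneg {p : E → ℝ} (hp : ∀ e, 0 ≤ p e ∧ p e ≤ 1) {w : ℕ → ℝ}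
    (hw : ∀ t, 0 ≤ w t) (T : ℕ) (select : (E → Bool) → ℕ → Finset E) :
    0 ≤ expectedReward p w T select :=
  sum_nonneg fun ω _ => mul_nonneg (probOf_nonneg hp ω) <|
    sum_nonneg fun t _ => mul_nonneg (hw t) (Nat.cast_nonneg _)

end Expectation

section NewEdges

variable [DecidableEq E] {select : (E → Bool) → ℕ → Finset E} {ω : E → Bool} {s t : ℕ} {e : E}

/-- The edges that `select` tries for the first time in round `s`. -/
def newEdges (select : (E → Bool) → ℕ → Finset E) (ω : E → Bool) (s : ℕ) : Finset E :=
  select ω s \ selectedBefore select ω s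

/-- The edges first tried by `alg` in round `s` and not tried by `sm` in any earlier round. For
online algorithms, whether `e` belongs to this set does not depend on the state of `e`. -/
def freshEdges (sm alg : (E → Bool) → ℕ → Finset E) (ω : E → Bool) (s : ℕ) : Finset E :=
  newEdges alg ω s \ selectedBefore sm ω s

lemma mem_selectedBefore : e ∈ selectedBefore select ω t ↔ ∃ s < t, e ∈ select ω s := by
  simp [selectedBefore]

lemma exists_mem_newEdges (he : e ∈ select ω t) : ∃ s ≤ t, e ∈ newEdges select ω s := by
  classical
  have hex : ∃ s, e ∈ select ω s := ⟨t, he⟩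
  refine ⟨Nat.find hex, Nat.find_min' hex he, mem_sdiff.2 ⟨Nat.find_spec hex, fun hb => ?_⟩⟩
  obtain ⟨r, hr, her⟩ := mem_selectedBefore.1 hb
  exact Nat.find_min hex hr her

lemma pairwise_disjoint_newEdges (select : (E → Bool) → ℕ → Finset E) (ω : E → Bool) :
    Pairwise (Function.onFun Disjoint (newEdges select ω)) :=
  (pairwise_disjoint_on _).2 fun s _ hst => disjoint_left.2 fun _ hs ht =>
    (mem_sdiff.1 ht).2 (mem_selectedBefore.2 ⟨s, hst, (mem_sdiff.1 hs).1⟩)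

end NewEdges

namespace GraphEdges

variable [DecidableEq V] {G : GraphEdges V E} {C : V → ℕ}

section Matching

lemma IsCapMatching.mono {M M' : Finset E} (hM : G.IsCapMatching C M) (h : M' ⊆ M) :
    G.IsCapMatching C M' :=
  fun v => (card_le_card (filter_subset_filter _ h)).trans (hM v)

variable [DecidableEq E]

lemma IsCapMatching.exists_saturated {M : Finset E} {e : E} (hM : G.IsCapMatching C M)
    (h : ¬ G.IsCapMatching C (insert e M)) :
    ∃ v ∈ G.ends e, C v ≤ #{f ∈ M | v ∈ G.ends f} := by
  obtain ⟨v, hv⟩ := not_forall.1 h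
  rw [not_le, filter_insert] at hv
  split_ifs at hv with hve
  · exact ⟨v, hve, Nat.le_of_lt_succ (hv.trans_le (card_insert_le _ _))⟩
  · exact absurd (hM v) hv.not_ge

lemma IsCapMatching.card_lt_of_insert {M : Finset E} {e : E} {v : V}
    (h : G.IsCapMatching C (insert e M)) (he : e ∉ M) (hv : v ∈ G.ends e) :
    #{f ∈ M | v ∈ G.ends f} < C v := by
  have hcard := h v
  rwa [filter_insert, if_pos hv, card_insert_of_notMem fun h' => he (mem_of_mem_filter _ h'),
    Nat.succ_le_iff] at hcard

variable {p : E → ℝ} {D A : Finset E} {L : List E}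

lemma IsGreedyRunCap.exists_blocking_vertex (hL : G.IsGreedyRunCap C p D A L)
    (hM : G.IsCapMatching C (A ∪ L.toFinset)) {e : E} (heD : e ∉ D)
    (heM : e ∉ A ∪ L.toFinset) :
    ∃ v ∈ G.ends e, C v ≤ #{f ∈ A ∪ L.toFinset | v ∈ G.ends f} ∧
      ∀ f ∈ L, v ∈ G.ends f → p e ≤ p f := by
  classical
  have take_mono {i j : ℕ} (hij : i ≤ j) :
      A ∪ (L.take i).toFinset ⊆ A ∪ (L.take j).toFinset :=
    union_subset_union_right fun f hf =>
      List.mem_toFinset.2 (List.take_subset_take_left L hij (List.mem_toFinset.1 hf))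
  have take_subset (i : ℕ) : A ∪ (L.take i).toFinset ⊆ A ∪ L.toFinset :=
    union_subset_union_right fun f hf =>
      List.mem_toFinset.2 (List.mem_of_mem_take (List.mem_toFinset.1 hf))
  have hex : ∃ j, ¬ G.AvailCap C D (A ∪ (L.take j).toFinset) e :=
    ⟨L.length, by simpa only [List.take_length] using hL.2 e⟩
  obtain ⟨j, unavailable, available⟩ :
      ∃ j, ¬ G.AvailCap C D (A ∪ (L.take j).toFinset) e ∧
        ∀ i < j, G.AvailCap C D (A ∪ (L.take i).toFinset) e :=
    ⟨Nat.find hex, Nat.find_spec hex, fun i hi => not_not.1 (Nat.find_min hex hi)⟩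
  obtain ⟨v, hve, saturated⟩ := (hM.mono (take_subset j)).exists_saturated
    fun h => unavailable ⟨heD, fun he => heM (take_subset j he), h⟩
  refine ⟨v, hve, saturated.trans (card_le_card (filter_subset_filter _ (take_subset j))), ?_⟩
  intro f hf hvf
  obtain ⟨i, hi, rfl⟩ := List.getElem_of_mem hf
  obtain ⟨⟨-, hnotMem, hcap⟩, hmax⟩ := hL.1 ⟨i, hi⟩
  -- Once `v` is saturated no edge at `v` is added, so every greedy edge at `v` precedes step `j`.
  refine hmax e (available i (lt_of_not_ge fun hji => ?_))
  exact ((saturated.trans (card_le_card (filter_subset_filter _ (take_mono hji)))).trans_lt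
    (hcap.card_lt_of_insert hnotMem hvf)).false

end Matching

section Load

/-- The fractional load at `v` of the edges of `S` weighted by `g`, as a share of the capacity
of `v` (`0` if that capacity is `0`). -/
noncomputable def load (G : GraphEdges V E) (C : V → ℕ) (g : E → ℝ) (S : Finset E) (v : V) : ℝ :=
  (∑ f ∈ S with v ∈ G.ends f, g f) / C v

lemma load_one (S : Finset E) (v : V) :
    G.load C 1 S v = #{f ∈ S | v ∈ G.ends f} / C v := by
  simp [load]

lemma load_nonneg {g : E → ℝ} (hg : ∀ e, 0 ≤ g e) (S : Finset E) (v : V) :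
    0 ≤ G.load C g S v :=
  div_nonneg (sum_nonneg fun f _ => hg f) (Nat.cast_nonneg _)

lemma load_mono {g : E → ℝ} (hg : ∀ e, 0 ≤ g e) {S S' : Finset E} (h : S ⊆ S') (v : V) :
    G.load C g S v ≤ G.load C g S' v :=
  div_le_div_of_nonneg_right
    (sum_le_sum_of_subset_of_nonneg (filter_subset_filter _ h) fun f _ _ => hg f)
    (Nat.cast_nonneg _)

lemma IsCapMatching.sum_load_le {M : Finset E} (hM : G.IsCapMatching C M) {g : E → ℝ}
    (hg : ∀ e, 0 ≤ g e) (S : Finset E) :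
    ∑ e ∈ M, ∑ v ∈ G.ends e, G.load C g S v ≤ 2 * ∑ f ∈ S, g f := by
  calc ∑ e ∈ M, ∑ v ∈ G.ends e, G.load C g S v
      = ∑ e ∈ M, ∑ f ∈ S, ∑ v ∈ G.ends f with v ∈ G.ends e, g f / C v := by
        simp only [load, sum_div]
        exact sum_congr rfl fun e _ => sum_comm' fun v f => by simp only [mem_filter]; tauto
    _ = ∑ f ∈ S, ∑ v ∈ G.ends f, ∑ e ∈ M with v ∈ G.ends e, g f / C v := by
        rw [sum_comm]
        exact sum_congr rfl fun f _ => sum_comm' fun e v => by simp only [mem_filter]; tauto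
    _ = ∑ f ∈ S, ∑ v ∈ G.ends f, (#{e ∈ M | v ∈ G.ends e} / C v : ℝ) * g f := by
        simp only [sum_const, nsmul_eq_mul, div_mul_eq_mul_div, mul_div_assoc]
    _ ≤ ∑ f ∈ S, ∑ _ ∈ G.ends f, g f := by
        gcongr with f _ v
        exact mul_le_of_le_one_left (hg f)
          (div_le_one_of_le₀ (Nat.cast_le.2 (hM v)) (Nat.cast_nonneg _))
    _ = 2 * ∑ f ∈ S, g f := by
        simp only [sum_const, G.card_ends, nsmul_eq_mul, Nat.cast_ofNat, mul_sum]

/-- The part of `e` that can be charged to the edges of `N`: the total load of `N` at those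
endpoints of `e` where every edge of `N` is at least as probable as `e`. -/
noncomputable def charge (G : GraphEdges V E) (C : V → ℕ) (p : E → ℝ) (N : Finset E) (e : E) : ℝ :=
  ∑ v ∈ G.ends e with ∀ f ∈ N, v ∈ G.ends f → p e ≤ p f, G.load C 1 N v

lemma charge_nonneg (p : E → ℝ) (N : Finset E) (e : E) : 0 ≤ G.charge C p N e :=
  sum_nonneg fun v _ => load_nonneg (fun _ => zero_le_one) N v

lemma mul_charge_le {p : E → ℝ} (hp : ∀ e, 0 ≤ p e) (N : Finset E) (e : E) :
    p e * G.charge C p N e ≤ ∑ v ∈ G.ends e, G.load C p N v := by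
  have mul_load_le (v : V) (hv : ∀ f ∈ N, v ∈ G.ends f → p e ≤ p f) :
      p e * G.load C 1 N v ≤ G.load C p N v := by
    rw [load_one, load, ← mul_div_assoc, mul_comm (p e), ← nsmul_eq_mul]
    gcongr
    exact card_nsmul_le_sum _ _ _ fun f hf => hv f (mem_filter.1 hf).1 (mem_filter.1 hf).2
  rw [charge, mul_sum]
  exact (sum_le_sum fun v hv => mul_load_le v (mem_filter.1 hv).2).trans <|
    sum_le_sum_of_subset_of_nonneg (filter_subset _ _) fun v _ _ => load_nonneg hp N v

lemma one_le_sum_load_add_charge {p : E → ℝ} {A N : Finset E} {e : E} {v : V}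
    (hv : v ∈ G.ends e) (hC : 0 < C v)
    (saturated : C v ≤ #{f ∈ A | v ∈ G.ends f} + #{f ∈ N | v ∈ G.ends f})
    (hmax : ∀ f ∈ N, v ∈ G.ends f → p e ≤ p f) :
    1 ≤ ∑ u ∈ G.ends e, G.load C 1 A u + G.charge C p N e := by
  have load_nonneg' (S : Finset E) (u : V) : 0 ≤ G.load C 1 S u :=
    load_nonneg (fun _ => zero_le_one) S u
  calc (1 : ℝ) ≤ G.load C 1 A v + G.load C 1 N v := by
        rw [load_one, load_one, ← add_div, one_le_div (Nat.cast_pos.2 hC)]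
        exact_mod_cast saturated
    _ ≤ ∑ u ∈ G.ends e, G.load C 1 A u + G.charge C p N e :=
        add_le_add (single_le_sum (fun u _ => load_nonneg' A u) hv)
          (single_le_sum (f := G.load C 1 N) (fun u _ => load_nonneg' N u)
            (mem_filter.2 ⟨hv, hmax⟩))

end Load

variable [DecidableEq E] {p : E → ℝ} {sm alg : (E → Bool) → ℕ → Finset E}

section Online

variable {select : (E → Bool) → ℕ → Finset E} {ω : E → Bool} {e : E} {s : ℕ}

lemma IsOnlineCap.select_update (h : G.IsOnlineCap C select)
    (he : e ∉ selectedBefore select ω s) (b : Bool) {r : ℕ} (hr : r ≤ s) :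
    select (Function.update ω e b) r = select ω r := by
  refine h.2 _ _ _ fun r' hr' f hf => Function.update_of_ne ?_ _ _
  rintro rfl
  exact he (mem_selectedBefore.2 ⟨r', hr'.trans_le hr, hf⟩)

lemma IsOnlineCap.selectedBefore_update (h : G.IsOnlineCap C select)
    (he : e ∉ selectedBefore select ω s) (b : Bool) :
    selectedBefore select (Function.update ω e b) s = selectedBefore select ω s :=
  biUnion_congr rfl fun _ hr => h.select_update he b (mem_range.1 hr).le

lemma IsOnlineCap.newEdges_update (h : G.IsOnlineCap C select)
    (he : e ∉ selectedBefore select ω s) (b : Bool) :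
    newEdges select (Function.update ω e b) s = newEdges select ω s := by
  rw [newEdges, h.selectedBefore_update he b, h.select_update he b le_rfl, newEdges]

end Online

section StableMatching

variable {ω : E → Bool} {e : E} {s t : ℕ}

lemma IsSMCap.mem_of_successful (hsm : G.IsSMCap C p sm) (hst : s ≤ t) (he : e ∈ sm ω s)
    (hω : ω e) : e ∈ sm ω t := by
  rcases hst.eq_or_lt with rfl | hlt
  · exact he
  · obtain ⟨L, -, hL⟩ := hsm.2 ω t
    rw [hL]
    exact mem_union_left _ (mem_filter.2 ⟨mem_selectedBefore.2 ⟨s, hlt, he⟩, hω⟩)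

lemma IsSMCap.exists_greedyRun_newEdges (hsm : G.IsSMCap C p sm) (ω : E → Bool) (s : ℕ) :
    ∃ L : List E,
      G.IsGreedyRunCap C p {e ∈ selectedBefore sm ω s | ¬ ω e} {e ∈ selectedBefore sm ω s | ω e} L ∧
      sm ω s = {e ∈ selectedBefore sm ω s | ω e} ∪ L.toFinset ∧
      newEdges sm ω s = L.toFinset := by
  obtain ⟨L, hL, hsel⟩ := hsm.2 ω s
  refine ⟨L, hL, hsel, ?_⟩
  have fresh : Disjoint L.toFinset (selectedBefore sm ω s) := by
    refine disjoint_left.2 fun f hf hb => ?_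
    obtain ⟨i, hi, rfl⟩ := List.getElem_of_mem (List.mem_toFinset.1 hf)
    obtain ⟨⟨hdead, hnotMem, -⟩, -⟩ := hL.1 ⟨i, hi⟩
    by_cases hω : ω L[i]
    · exact hnotMem (mem_union_left _ (mem_filter.2 ⟨hb, hω⟩))
    · exact hdead (mem_filter.2 ⟨hb, hω⟩)
  rw [newEdges, hsel, union_sdiff_distrib, sdiff_eq_empty_iff_subset.2 (filter_subset _ _),
    empty_union, sdiff_eq_self_of_disjoint fresh]

lemma IsSMCap.exists_blocking_vertex (hsm : G.IsSMCap C p sm)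
    (hbefore : e ∉ selectedBefore sm ω s) (hnow : e ∉ sm ω s) :
    ∃ v ∈ G.ends e,
      C v ≤ #{f ∈ {f ∈ selectedBefore sm ω s | ω f} | v ∈ G.ends f} +
        #{f ∈ newEdges sm ω s | v ∈ G.ends f} ∧
      ∀ f ∈ newEdges sm ω s, v ∈ G.ends f → p e ≤ p f := by
  obtain ⟨L, hL, hsel, hnew⟩ := hsm.exists_greedyRun_newEdges ω s
  obtain ⟨v, hv, saturated, hmax⟩ := hL.exists_blocking_vertex (hsel ▸ hsm.1.1 ω s)
    (fun h => hbefore (mem_of_mem_filter _ h)) (hsel ▸ hnow)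
  rw [hnew]
  refine ⟨v, hv, ?_, fun f hf => hmax f (List.mem_toFinset.1 hf)⟩
  rw [filter_union] at saturated
  exact saturated.trans (card_union_le _ _)

lemma IsSMCap.sum_card_successful_newEdges_le (hsm : G.IsSMCap C p sm) (ω : E → Bool) (t : ℕ) :
    ∑ s ∈ range (t + 1), #{e ∈ newEdges sm ω s | ω e} ≤ #{e ∈ sm ω t | ω e} := by
  rw [← card_biUnion fun a _ b _ hab =>
    (pairwise_disjoint_newEdges sm ω hab).mono (filter_subset _ _) (filter_subset _ _)]
  refine card_le_card (biUnion_subset.2 fun s hs e he => ?_)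
  obtain ⟨hnew, hω⟩ := mem_filter.1 he
  exact mem_filter.2 ⟨hsm.mem_of_successful (Nat.le_of_lt_succ (mem_range.1 hs))
    (mem_sdiff.1 hnew).1 hω, hω⟩

end StableMatching

section Charging

lemma IsSMCap.exists_freshEdges_one_le (hsm : G.IsSMCap C p sm) (halg : G.IsOnlineCap C alg)
    {ω : E → Bool} {t : ℕ} {e : E} (he : e ∈ alg ω t) (hω : ω e) (hesm : e ∉ sm ω t) :
    ∃ s ∈ range (t + 1), e ∈ freshEdges sm alg ω s ∧
      1 ≤ ∑ v ∈ G.ends e, G.load C 1 {f ∈ sm ω t | ω f} v +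
        G.charge C p (newEdges sm ω s) e := by
  obtain ⟨s, hst, hes⟩ := exists_mem_newEdges he
  have untried {r : ℕ} (hr : r ≤ s) : e ∉ sm ω r := fun h =>
    hesm (hsm.mem_of_successful (hr.trans hst) h hω)
  have hbefore : e ∉ selectedBefore sm ω s := fun h => by
    obtain ⟨r, hr, her⟩ := mem_selectedBefore.1 h
    exact untried hr.le her
  obtain ⟨v, hv, saturated, hmax⟩ := hsm.exists_blocking_vertex hbefore (untried le_rfl)
  have kept : {f ∈ selectedBefore sm ω s | ω f} ⊆ {f ∈ sm ω t | ω f} := fun f hf => by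
    obtain ⟨hb, hωf⟩ := mem_filter.1 hf
    obtain ⟨r, hr, hfr⟩ := mem_selectedBefore.1 hb
    exact mem_filter.2 ⟨hsm.mem_of_successful (hr.le.trans hst) hfr hωf, hωf⟩
  have hCv : 0 < C v := (card_pos.2 ⟨e, mem_filter.2 ⟨he, hv⟩⟩).trans_le (halg.1 ω t v)
  refine ⟨s, mem_range.2 (Nat.lt_succ_of_le hst), mem_sdiff.2 ⟨hes, hbefore⟩, ?_⟩
  refine (one_le_sum_load_add_charge hv hCv saturated hmax).trans ?_
  gcongr with u
  exact load_mono (fun _ => zero_le_one) kept u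

lemma IsSMCap.card_successful_le (hsm : G.IsSMCap C p sm) (halg : G.IsOnlineCap C alg)
    (ω : E → Bool) (t : ℕ) :
    (#{e ∈ alg ω t | ω e} : ℝ) ≤ 3 * #{e ∈ sm ω t | ω e} +
      ∑ s ∈ range (t + 1), ∑ e ∈ freshEdges sm alg ω s with ω e,
        G.charge C p (newEdges sm ω s) e := by
  set S := {e ∈ sm ω t | ω e}
  set B := {e ∈ alg ω t | ω e} \ S with hB
  have mem_B {e : E} (he : e ∈ B) : e ∈ alg ω t ∧ ω e ∧ e ∉ sm ω t := by
    simp only [hB, S, mem_sdiff, mem_filter] at he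
    tauto
  let c (s : ℕ) (e : E) : ℝ := G.charge C p (newEdges sm ω s) e
  have hc (s : ℕ) (e : E) : 0 ≤ c s e := charge_nonneg p _ e
  have charged (e : E) (he : e ∈ B) : (1 : ℝ) ≤ ∑ v ∈ G.ends e, G.load C 1 S v +
      ∑ s ∈ range (t + 1), if e ∈ freshEdges sm alg ω s then c s e else 0 := by
    obtain ⟨healg, hω, hesm⟩ := mem_B he
    obtain ⟨s, hs, hfresh, hone⟩ := hsm.exists_freshEdges_one_le halg healg hω hesm
    refine hone.trans (add_le_add_right ?_ _)
    rw [← sum_filter]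
    exact single_le_sum (f := (c · e)) (fun r _ => hc r e) (mem_filter.2 ⟨hs, hfresh⟩)
  have kept_charges : ∑ e ∈ B, ∑ v ∈ G.ends e, G.load C 1 S v ≤ 2 * #S := by
    have hBM : G.IsCapMatching C B := (halg.1 ω t).mono fun e he => (mem_B he).1
    simpa using hBM.sum_load_le (g := 1) (fun _ => zero_le_one) S
  have new_charges : ∑ e ∈ B, ∑ s ∈ range (t + 1),
      (if e ∈ freshEdges sm alg ω s then c s e else 0) ≤
        ∑ s ∈ range (t + 1), ∑ e ∈ freshEdges sm alg ω s with ω e, c s e := by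
    rw [sum_comm]
    refine sum_le_sum fun s _ => ?_
    rw [← sum_filter]
    refine sum_le_sum_of_subset_of_nonneg (fun e he => ?_) fun e _ _ => hc s e
    obtain ⟨heB, hfresh⟩ := mem_filter.1 he
    exact mem_filter.2 ⟨hfresh, (mem_B heB).2.1⟩
  have card_B := card_nsmul_le_sum B _ 1 charged
  rw [sum_add_distrib, nsmul_eq_mul, mul_one] at card_B
  have card_le : (#{e ∈ alg ω t | ω e} : ℝ) ≤ #B + #S := by
    exact_mod_cast card_le_card_sdiff_add_card
  linarith

variable [Fintype E]

lemma IsOnlineCap.expectation_charge_le (hsm : G.IsOnlineCap C sm)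
    (hp : ∀ e, 0 ≤ p e ∧ p e ≤ 1) (halg : G.IsOnlineCap C alg) (s : ℕ) :
    expectation p (fun ω => ∑ e ∈ freshEdges sm alg ω s with ω e,
      G.charge C p (newEdges sm ω s) e) ≤
      2 * expectation p (fun ω => (#{e ∈ newEdges sm ω s | ω e} : ℝ)) := by
  have fresh_update (ω : E → Bool) (e : E) (b : Bool) (he : e ∈ freshEdges sm alg ω s) :
      e ∈ freshEdges sm alg (Function.update ω e b) s ∧
        G.charge C p (newEdges sm (Function.update ω e b) s) e =
          G.charge C p (newEdges sm ω s) e := by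
    obtain ⟨hnew, hbefore⟩ := mem_sdiff.1 he
    rw [freshEdges, halg.newEdges_update (mem_sdiff.1 hnew).2, hsm.selectedBefore_update hbefore,
      hsm.newEdges_update hbefore]
    exact ⟨he, rfl⟩
  have new_update (ω : E → Bool) (e : E) (b : Bool) (he : e ∈ newEdges sm ω s) :
      e ∈ newEdges sm (Function.update ω e b) s := by
    rwa [hsm.newEdges_update (mem_sdiff.1 he).2]
  rw [expectation_sum_successful p fresh_update, expectation_card_successful p new_update,
    ← expectation_const_mul]
  refine expectation_mono hp fun ω => ?_
  have fresh_matching : G.IsCapMatching C (freshEdges sm alg ω s) :=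
    (halg.1 ω s).mono (sdiff_subset.trans sdiff_subset)
  exact (sum_le_sum fun e _ => mul_charge_le (fun f => (hp f).1) _ e).trans
    (fresh_matching.sum_load_le (fun f => (hp f).1) _)

lemma IsSMCap.expectation_card_successful_le (hsm : G.IsSMCap C p sm)
    (hp : ∀ e, 0 ≤ p e ∧ p e ≤ 1) (halg : G.IsOnlineCap C alg) (t : ℕ) :
    expectation p (fun ω => (#{e ∈ alg ω t | ω e} : ℝ)) ≤
      5 * expectation p (fun ω => (#{e ∈ sm ω t | ω e} : ℝ)) := by
  have new_le : ∑ s ∈ range (t + 1), expectation p (fun ω => (#{e ∈ newEdges sm ω s | ω e} : ℝ)) ≤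
      expectation p (fun ω => (#{e ∈ sm ω t | ω e} : ℝ)) := by
    rw [← expectation_sum]
    exact expectation_mono hp fun ω => mod_cast hsm.sum_card_successful_newEdges_le ω t
  calc expectation p (fun ω => (#{e ∈ alg ω t | ω e} : ℝ))
      ≤ 3 * expectation p (fun ω => (#{e ∈ sm ω t | ω e} : ℝ)) +
          ∑ s ∈ range (t + 1), expectation p (fun ω => ∑ e ∈ freshEdges sm alg ω s with ω e,
            G.charge C p (newEdges sm ω s) e) := by
        rw [← expectation_const_mul, ← expectation_sum, ← expectation_add]
        exact expectation_mono hp (hsm.card_successful_le halg · t)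
    _ ≤ 3 * expectation p (fun ω => (#{e ∈ sm ω t | ω e} : ℝ)) +
          ∑ s ∈ range (t + 1),
            2 * expectation p (fun ω => (#{e ∈ newEdges sm ω s | ω e} : ℝ)) := by
        gcongr with s
        exact hsm.1.expectation_charge_le hp halg s
    _ ≤ 5 * expectation p (fun ω => (#{e ∈ sm ω t | ω e} : ℝ)) := by
        rw [← mul_sum]
        linarith

end Charging

end GraphEdges

theorem smCap_approximates_opt_general
    [DecidableEq V] [Fintype E] [DecidableEq E] (G : GraphEdges V E) (C : V → ℕ)
    (p : E → ℝ) (hp : ∀ e, 0 ≤ p e ∧ p e ≤ 1) (T : ℕ) (w : ℕ → ℝ) (hw : ∀ t, 0 ≤ w t)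
    (sm alg : (E → Bool) → ℕ → Finset E)
    (hsm : G.IsSMCap C p sm) (halg : G.IsOnlineCap C alg) :
    (1 / 5 : ℝ) * expectedReward p w T alg ≤ expectedReward p w T sm := by
  rw [expectedReward_eq_sum_expectation, expectedReward_eq_sum_expectation, mul_sum]
  refine sum_le_sum fun t _ => ?_
  linarith [mul_le_mul_of_nonneg_left (hsm.expectation_card_successful_le hp halg t) (hw t)]

/-- In the capacitated model with positive integer
capacities, every capacitated stable matching process is a
`1/11`-approximation to every online algorithm. -/
theorem smCap_approximates_opt
    {V E : Type} [DecidableEq V] [Fintype E] [DecidableEq E]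
    (G : GraphEdges V E) (C : V → ℕ) (hC : ∀ v, 0 < C v)
    (p : E → ℝ) (hp : ∀ e, 0 ≤ p e ∧ p e ≤ 1)
    (T : ℕ) (w : ℕ → ℝ) (hw : ∀ t, 0 ≤ w t)
    (sm alg : (E → Bool) → ℕ → Finset E)
    (hsm : G.IsSMCap C p sm) (halg : G.IsOnlineCap C alg) :
    (1 / 11 : ℝ) * expectedReward p w T alg ≤ expectedReward p w T sm := by
  refine le_trans ?_ (smCap_approximates_opt_general G C p hp T w hw sm alg hsm halg)
  exact mul_le_mul_of_nonneg_right (by norm_num) (expectedReward_nonneg hp hw T alg)
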